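/- arXiv:1206.0585 — 2 statements merged into one kernel-verified Lean document; each statement's English description precedes it below -/
import Mathlib

section
/- If f : X → X is a non-surjective function on a finite set X, then f can be written as a composition f = f_n ∘ ⋯ ∘ f_1 of idempotent functions f_i : X → X (i.e., functions with f_i ∘ f_i = f_i). -/
/-- `f` is a composition of idempotents. -/
def IdemComp {X : Type*} (f : X → X) : Prop :=
  ∃ l : List (X → X), (∀ g ∈ l, g ∘ g = g) ∧ l.foldr (· ∘ ·) id = f

theorem IdemComp.cons {X : Type*} {f : X → X} (hf : IdemComp f) (g : X → X) (hg : g ∘ g = g) :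
    IdemComp (g ∘ f) := by
  obtain ⟨l, hl, rfl⟩ := hf
  refine ⟨g :: l, ?_, rfl⟩
  intro k hk
  rcases List.mem_cons.1 hk with rfl | hk
  · exact hg
  · exact hl k hk

theorem update_idem {X : Type*} [DecidableEq X] (a b : X) :
    (Function.update id b a : X → X) ∘ (Function.update id b a) = Function.update id b a := by
  funext x
  simp only [Function.comp, Function.update_apply, id]
  grind

theorem IdemComp.swap {X : Type*} [DecidableEq X] {f : X → X} (hf : IdemComp f)
    (h : X) (hh : ∀ x, f x ≠ h) (x y : X) (hxy : x ≠ y) : IdemComp (Equiv.swap x y ∘ f) := by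
  by_cases h1 : h = x
  · convert hf.cons _ (update_idem x y) using 1
    funext z
    have := hh z
    simp only [Function.comp, Function.update_apply, id, Equiv.swap_apply_def]
    grind
  by_cases h2 : h = y
  · convert hf.cons _ (update_idem y x) using 1
    funext z
    have := hh z
    simp only [Function.comp, Function.update_apply, id, Equiv.swap_apply_def]
    grind
  convert ((hf.cons _ (update_idem h x)).cons _ (update_idem x y)).cons _ (update_idem y h) using 1
  funext z
  have := hh z
  simp only [Function.comp, Function.update_apply, id, Equiv.swap_apply_def]
  grind

theorem IdemComp.perm {X : Type*} [Finite X] {f : X → X} (hf : IdemComp f)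
    (hs : ¬ Function.Surjective f) (σ : Equiv.Perm X) : IdemComp (σ ∘ f) := by
  classical
  induction σ using Equiv.Perm.swap_induction_on with
  | one => simpa using hf
  | swap_mul τ x y hxy ih =>
    have h3 : ¬ Function.Surjective (τ ∘ f) := by
      rwa [Equiv.comp_surjective]
    simp only [Function.Surjective, not_forall, not_exists] at h3
    obtain ⟨h, hh⟩ := h3
    exact ih.swap h hh x y hxy

/-- A non-surjective function on a finite set is a composition of idempotents. -/
theorem stmt_0 {X : Type*} [Finite X] (f : X → X) (hf : ¬ Function.Surjective f) :
    ∃ l : List (X → X), (∀ g ∈ l, g ∘ g = g) ∧ l.foldr (· ∘ ·) id = f := by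
  classical
  have := Fintype.ofFinite X
  change IdemComp f
  let e : X → X := fun x => Set.rangeSplitting f ⟨f x, x, rfl⟩
  have hfe : ∀ x, f (e x) = f x := fun x => Set.apply_rangeSplitting f _
  have hef : ∀ x y, f x = f y → e x = e y := by
    intro x y h
    simp only [e, h]
  have hee : e ∘ e = e := funext fun x => hef _ _ (hfe x)
  have hinj : Set.InjOn f (Set.range e) := by
    rintro _ ⟨x, rfl⟩ _ ⟨y, rfl⟩ h
    rw [hfe, hfe] at h
    exact hef _ _ h
  obtain ⟨g, hg⟩ := Set.MapsTo.exists_equiv_extend_of_card_eq (t := (Finset.univ : Finset X))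
    (by simp) (s := Set.range e) (f := f) (by intro x _; simp) hinj
  let σ : Equiv.Perm X := g.trans (Equiv.subtypeUnivEquiv (by simp))
  have hσ : σ ∘ e = f := by
    funext x
    exact (hg (e x) ⟨x, rfl⟩).trans (hfe x)
  have hes : ¬ Function.Surjective e := by
    intro h
    exact hf (hσ ▸ σ.surjective.comp h)
  rw [← hσ]
  exact IdemComp.perm ⟨[e], by simpa using hee, rfl⟩ hes σ
end

section
/- Let F : S^ℤ → S^ℤ be a cellular automaton that is not preinjective. Then F is not surjective (Moore's direction of the Garden of Eden theorem). -/
theorem ca_local {S : Type*} [Fintype S] [TopologicalSpace S] [DiscreteTopology S]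
    (F : (ℤ → S) → (ℤ → S)) (hcont : Continuous F) :
    ∃ r : ℕ, ∀ u v : ℤ → S, (∀ i : ℤ, -r ≤ i → i ≤ r → u i = v i) → F u 0 = F v 0 := by
  by_contra hcon
  push Not at hcon
  let K : ℕ → Set ((ℤ → S) × (ℤ → S)) := fun r =>
    {p | (∀ i : ℤ, -r ≤ i → i ≤ r → p.1 i = p.2 i) ∧ F p.1 0 ≠ F p.2 0}
  have hclosed : ∀ r, IsClosed (K r) := by
    intro r
    have hK : K r = (⋂ i : ℤ, ⋂ _ : -(r : ℤ) ≤ i, ⋂ _ : i ≤ r, {p | p.1 i = p.2 i}) ∩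
        (fun p : (ℤ → S) × (ℤ → S) => (F p.1 0, F p.2 0)) ⁻¹' {q : S × S | q.1 ≠ q.2} := by
      ext p
      simp [K]
    rw [hK]
    apply IsClosed.inter
    · refine isClosed_iInter fun i => isClosed_iInter fun _ => isClosed_iInter fun _ => ?_
      exact isClosed_eq (by fun_prop) (by fun_prop)
    · have hc : Continuous (fun p : (ℤ → S) × (ℤ → S) => (F p.1 0, F p.2 0)) := by fun_prop
      exact (isClosed_discrete {q : S × S | q.1 ≠ q.2}).preimage hc
  obtain ⟨p, hp⟩ := IsCompact.nonempty_iInter_of_sequence_nonempty_isCompact_isClosed K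
    (by
      intro n p hp
      refine ⟨fun i h1 h2 => hp.1 i ?_ ?_, hp.2⟩ <;> push_cast <;> omega)
    (by
      intro n
      obtain ⟨u, v, h1, h2⟩ := hcon n
      exact ⟨(u, v), h1, h2⟩)
    (hclosed 0).isCompact hclosed
  rw [Set.mem_iInter] at hp
  apply (hp 0).2
  have : p.1 = p.2 := by
    funext i
    exact (hp i.natAbs).1 i (by omega) (by omega)
  rw [this]

theorem ca_shift {S : Type*}
    (σ : (ℤ → S) → (ℤ → S)) (hσ : ∀ x i, σ x i = x (i + 1))
    (F : (ℤ → S) → (ℤ → S)) (hcomm : F ∘ σ = σ ∘ F) (u : ℤ → S) (n : ℤ) :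
    ∀ i, F (fun j => u (j + n)) i = F u (i + n) := by
  have h1 : ∀ u i, F (fun j => u (j + 1)) i = F u (i + 1) := by
    intro u i
    have h := congrFun (congrFun hcomm u) i
    simp only [Function.comp, hσ] at h
    rw [← h]
    congr 1
    congr 1
    funext j
    rw [hσ]
  induction n using Int.induction_on with
  | zero => simp
  | succ k ih =>
    intro i
    have := h1 (fun j => u (j + k)) i
    rw [ih] at this
    rw [show i + ((k : ℤ) + 1) = i + 1 + k by ring, ← this]
    congr 1
    funext j
    congr 1
    ring
  | pred k ih =>
    intro i
    have := h1 (fun j => u (j + (-(k : ℤ) - 1))) (i - 1)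
    rw [show i - 1 + 1 = i by ring] at this
    rw [← this, show i + (-(k : ℤ) - 1) = i - 1 + -(k : ℤ) by ring, ← ih]
    congr 1
    funext j
    congr 1
    ring

theorem growth_contra (A : ℕ) (h : ∀ k, A ^ k ≤ (A - 1) ^ (k + 2)) (hA : 1 ≤ A) : False := by
  obtain ⟨a, rfl⟩ : ∃ a, A = a + 1 := ⟨A - 1, by omega⟩
  simp only [Nat.add_sub_cancel] at h
  rcases Nat.eq_zero_or_pos a with rfl | ha
  · simpa using h 0
  have ha' : (0 : ℝ) < a := by exact_mod_cast ha
  obtain ⟨k, hk⟩ := pow_unbounded_of_one_lt ((a : ℝ) ^ 2)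
    (show (1 : ℝ) < (a + 1) / a by rw [lt_div_iff₀ ha']; linarith)
  have h2 : ((a : ℝ) + 1) ^ k ≤ (a : ℝ) ^ (k + 2) := by exact_mod_cast h k
  rw [div_pow, lt_div_iff₀ (by positivity), ← pow_add, add_comm 2 k] at hk
  linarith

/-- Moore's direction of the Garden of Eden theorem: a non-preinjective cellular automaton
on the full shift is not surjective. -/
theorem stmt_15 {S : Type*} [Fintype S] [TopologicalSpace S] [DiscreteTopology S]
    (σ : (ℤ → S) → (ℤ → S)) (hσ : ∀ x i, σ x i = x (i + 1))
    (F : (ℤ → S) → (ℤ → S)) (hcont : Continuous F) (hcomm : F ∘ σ = σ ∘ F)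
    (x y : ℤ → S) (hxy : x ≠ y) (hfin : {j : ℤ | x j ≠ y j}.Finite)
    (hF : F x = F y) :
    ¬ Function.Surjective F := by
  classical
  intro hsurj
  obtain ⟨r, hr⟩ := ca_local F hcont
  -- general local dependence, with a translation
  have hloc : ∀ (u v : ℤ → S) (n m : ℤ),
      (∀ i : ℤ, -r ≤ i → i ≤ r → u (i + n) = v (i + m)) → F u n = F v m := by
    intro u v n m h
    have := hr (fun j => u (j + n)) (fun j => v (j + m)) h
    rwa [ca_shift σ hσ F hcomm, ca_shift σ hσ F hcomm, zero_add, zero_add] at this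
  obtain ⟨M, hM⟩ : ∃ M : ℕ, ∀ j : ℤ, x j ≠ y j → -M ≤ j ∧ j ≤ M := by
    refine ⟨hfin.toFinset.sup Int.natAbs, fun j hj => ?_⟩
    have : j.natAbs ≤ hfin.toFinset.sup Int.natAbs :=
      Finset.le_sup (f := Int.natAbs) (by simpa using hj)
    omega
  obtain ⟨j0, hj0⟩ := Function.ne_iff.1 hxy
  obtain ⟨B, hB⟩ : ∃ B : ℕ, B = M + 2 * r := ⟨_, rfl⟩
  obtain ⟨L, hL⟩ : ∃ L : ℕ, L = 2 * B + 1 := ⟨_, rfl⟩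
  have hLpos : (0 : ℤ) < L := by omega
  let p : Fin L → S := fun i => x ((i : ℕ) - B)
  let blk : (ℤ → S) → ℤ → Fin L → S := fun z b i => z (b * L + (i : ℕ))
  have hdm : ∀ (b i : ℤ), 0 ≤ i → i < L → (b * L + i) / L = b ∧ (b * L + i) % L = i := by
    intro b i h0 h1
    constructor
    · rw [add_comm, Int.add_mul_ediv_right _ _ hLpos.ne', Int.ediv_eq_zero_of_lt h0 h1, zero_add]
    · rw [add_comm, Int.add_mul_emod_self_right, Int.emod_eq_of_lt h0 h1]
  let R : (ℤ → S) → (ℤ → S) := fun z j => if blk z (j / L) = p then y (j % L - B) else z j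
  have hR : ∀ z b (i : ℤ), 0 ≤ i → i < L →
      R z (b * L + i) = if blk z b = p then y (i - B) else z (b * L + i) := by
    intro z b i h0 h1
    simp only [R, (hdm b i h0 h1).1, (hdm b i h0 h1).2]
  have hbp : ∀ z b, blk z b = p → ∀ i : ℤ, 0 ≤ i → i < L → z (b * L + i) = x (i - B) := by
    intro z b h i h0 h1
    have := congrFun h ⟨i.toNat, by omega⟩
    simpa [blk, p, Int.toNat_of_nonneg h0] using this
  have hRgood : ∀ z b, blk (R z) b ≠ p := by
    intro z b h
    by_cases hb : blk z b = p
    · have hj := hM j0 hj0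
      have h1 := hbp _ _ h (j0 + B) (by omega) (by omega)
      rw [hR _ _ _ (by omega) (by omega), if_pos hb] at h1
      simp only [add_sub_cancel_right] at h1
      exact hj0 h1.symm
    · apply hb
      rw [← h]
      funext i
      have := hR z b (i : ℕ) (by omega) (by have := i.2; omega)
      rw [if_neg hb] at this
      exact this.symm
  have hRF : ∀ z, F (R z) = F z := by
    intro z
    funext n
    by_cases hd : ∀ i : ℤ, -r ≤ i → i ≤ r → R z (i + n) = z (i + n)
    · exact hloc _ _ _ _ hd
    · push Not at hd
      obtain ⟨i, h1, h2, h3⟩ := hd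
      obtain ⟨b, t, ht0, ht1, hbt⟩ : ∃ b t : ℤ, 0 ≤ t ∧ t < L ∧ i + n = b * L + t :=
        ⟨(i + n) / L, (i + n) % L, Int.emod_nonneg _ hLpos.ne', Int.emod_lt_of_pos _ hLpos,
          by rw [mul_comm]; exact (Int.mul_ediv_add_emod _ _).symm⟩
      rw [hbt, hR _ _ _ ht0 ht1] at h3
      by_cases hb : blk z b = p
      swap
      · simp [hb] at h3
      rw [if_pos hb, hbp _ _ hb _ ht0 ht1] at h3
      have hj := hM _ (Ne.symm h3)
      have e1 : F (R z) n = F y (n - b * L - B) := by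
        apply hloc
        intro l hl1 hl2
        rw [show l + n = b * L + (l + n - b * L) by ring, hR _ _ _ (by omega) (by omega),
          if_pos hb]
        congr 1
        ring
      have e2 : F z n = F x (n - b * L - B) := by
        apply hloc
        intro l hl1 hl2
        rw [show l + n = b * L + (l + n - b * L) by ring, hbp _ _ hb _ (by omega) (by omega)]
        congr 1
        ring
      rw [e1, e2, hF]
  -- counting
  choose G hG using hsurj
  apply growth_contra (Fintype.card (Fin L → S))
  swap
  · exact Fintype.card_pos_iff.2 ⟨p⟩
  intro k
  let ext : (Fin k → Fin L → S) → (ℤ → S) := fun v j =>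
    if h : 0 ≤ j / L - 1 ∧ j / L - 1 < k then
      v ⟨(j / L - 1).toNat, by omega⟩ ⟨(j % L).toNat, by
        have := Int.emod_lt_of_pos j hLpos
        omega⟩
    else x 0
  have hext : ∀ v (b : Fin k) (i : Fin L), ext v (((b : ℕ) + 1 : ℤ) * L + (i : ℕ)) = v b i := by
    intro v b i
    have hb := b.2
    have hi := i.2
    obtain ⟨d1, d2⟩ := hdm ((b : ℕ) + 1 : ℤ) (i : ℕ) (by omega) (by omega)
    simp only [ext, d1, d2]
    rw [dif_pos (by omega)]
    congr 1
    congr 1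
    simp
  let Φ : (Fin k → Fin L → S) → (Fin (k + 2) → {w : Fin L → S // w ≠ p}) := fun v b =>
    ⟨blk (R (G (ext v))) (b : ℕ), hRgood _ _⟩
  have hΦ : Function.Injective Φ := by
    intro v w hvw
    have hag : ∀ j : ℤ, 0 ≤ j → j < (k + 2) * L →
        R (G (ext v)) j = R (G (ext w)) j := by
      intro j h0 h1
      have q0 : 0 ≤ j / L := Int.ediv_nonneg h0 hLpos.le
      have q1 : j / L < k + 2 := Int.ediv_lt_of_lt_mul hLpos h1
      have m0 := Int.emod_nonneg j hLpos.ne'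
      have m1 := Int.emod_lt_of_pos j hLpos
      have := congrFun (congrArg Subtype.val (congrFun hvw ⟨(j / L).toNat, by omega⟩))
        ⟨(j % L).toNat, by omega⟩
      simp only [Φ, blk, Int.toNat_of_nonneg q0, Int.toNat_of_nonneg m0] at this
      rwa [mul_comm, Int.mul_ediv_add_emod] at this
    funext b i
    rw [← hext v b i, ← hext w b i, ← hG (ext v), ← hG (ext w), ← hRF (G (ext v)),
      ← hRF (G (ext w))]
    apply hloc
    intro l hl1 hl2
    have hb : ((b : ℕ) : ℤ) + 1 ≤ k := by have := b.2; omega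
    have hi := i.2
    have hb1 : (((b : ℕ) : ℤ) + 1) * L ≤ k * L := mul_le_mul_of_nonneg_right hb hLpos.le
    have hb0 : 1 * (L : ℤ) ≤ (((b : ℕ) : ℤ) + 1) * L :=
      mul_le_mul_of_nonneg_right (by omega) hLpos.le
    apply hag
    · omega
    · rw [add_mul (k : ℤ)]
      omega
  have hc := Fintype.card_le_of_injective Φ hΦ
  rw [Fintype.card_fun, Fintype.card_fun (α := Fin (k + 2)), Fintype.card_fin, Fintype.card_fin,
    Fintype.card_subtype_compl, Fintype.card_subtype_eq] at hc
  exact hc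
end
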